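/- Let R be a Noetherian semi-local ring such that R_M is a one-dimensional Cohen–Macaulay local ring for every maximal ideal M of R, and suppose that R is an Arf ring. Then for every finite subgroup G of the group of ring automorphisms of R whose order is invertible in R, the invariant subring R^G = {a ∈ R : σ(a) = a for all σ ∈ G} is an Arf ring. -/

import Mathlib

open scoped TensorProduct

/-- `A` is a *weakly Arf ring*: whenever `x, y, z ∈ A` with `x` a non-zerodivisor on `A`
and the fractions `y/x` and `z/x` in the total ring of fractions `Q(A)` are integral
over `A`, then `y * z ∈ x A`. -/
def IsWeaklyArfRing (A : Type*) [CommRing A] : Prop :=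
  ∀ (x y z : A) (hx : x ∈ nonZeroDivisors A),
    IsIntegral A (IsLocalization.mk' (FractionRing A) y
      (⟨x, hx⟩ : nonZeroDivisors A)) →
    IsIntegral A (IsLocalization.mk' (FractionRing A) z
      (⟨x, hx⟩ : nonZeroDivisors A)) →
    y * z ∈ Ideal.span {x}

/-- `a` belongs to the integral closure of the ideal `I`: it satisfies an equation
`a ^ n + c 1 * a ^ (n - 1) + ⋯ + c n = 0` with `c i ∈ I ^ i`, for some `n ≥ 1`. -/
def MemIdealIntegralClosure {A : Type*} [CommRing A] (I : Ideal A) (a : A) : Prop :=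
  ∃ n : ℕ, 0 < n ∧ ∃ c : ℕ → A,
    (∀ i ∈ Finset.Icc 1 n, c i ∈ I ^ i) ∧
    a ^ n + ∑ i ∈ Finset.Icc 1 n, c i * a ^ (n - i) = 0

/-- The integral closure `Ī` of an ideal `I` of `A`, as a subset of `A`. -/
def idealIntegralClosure {A : Type*} [CommRing A] (I : Ideal A) : Set A :=
  {a | MemIdealIntegralClosure I a}

/-- An ideal `I` is integrally closed if `Ī = I`. -/
def Ideal.IsIntegrallyClosedIdeal {A : Type*} [CommRing A] (I : Ideal A) : Prop :=
  idealIntegralClosure I = (I : Set A)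

/-- `A` is an *Arf ring*: (1) every integrally closed ideal of `A` containing a
non-zerodivisor has a principal reduction, i.e. `I ^ (n + 1) = a * I ^ n` for some
`n ≥ 0` and `a ∈ I`; and (2) whenever `x, y, z ∈ A` with `x` a non-zerodivisor and
`y/x, z/x` integral over `A` in `Q(A)`, then `y * z ∈ x A`. -/
def IsArfRing (A : Type*) [CommRing A] : Prop :=
  (∀ I : Ideal A, Ideal.IsIntegrallyClosedIdeal I →
      (∃ x ∈ I, x ∈ nonZeroDivisors A) →
      ∃ (n : ℕ) (a : A), a ∈ I ∧ I ^ (n + 1) = Ideal.span {a} * I ^ n) ∧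
  IsWeaklyArfRing A

/-- `xs` is a regular sequence on `R`: for each `i`, the element `xs i` acts injectively
on `R / (xs 0, …, xs (i-1))`. -/
def IsRegularSeq (R : Type*) [CommRing R] (xs : List R) : Prop :=
  ∀ (i : ℕ) (h : i < xs.length),
    IsSMulRegular (R ⧸ Ideal.span {y : R | y ∈ xs.take i}) (xs.get ⟨i, h⟩)

/-- For a Noetherian local ring `R`, `depth R ≥ n` holds iff there is a regular sequence
of length `n` consisting of elements of the maximal ideal. -/
def RingDepthGE (R : Type*) [CommRing R] [IsLocalRing R] (n : ℕ) : Prop :=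
  ∃ xs : List R, xs.length = n ∧ (∀ x ∈ xs, x ∈ IsLocalRing.maximalIdeal R) ∧
    IsRegularSeq R xs

/-- The invariant subring `A^G = {a ∈ A : σ a = a for all σ ∈ G}` of `A` under a
subgroup `G` of the ring automorphisms of `A`. -/
def invariantSubring {A : Type*} [CommRing A] (G : Subgroup (A ≃+* A)) : Subring A where
  carrier := {a | ∀ σ ∈ G, σ a = a}
  mul_mem' := by
    intro a b ha hb σ hσ
    simp only [map_mul, ha σ hσ, hb σ hσ]
  one_mem' := by intro σ _; simp
  add_mem' := by
    intro a b ha hb σ hσ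
    simp only [map_add, ha σ hσ, hb σ hσ]
  zero_mem' := by intro σ _; simp
  neg_mem' := by
    intro a ha σ hσ
    simp only [map_neg, ha σ hσ]

lemma crt_unit {S H : Type*} [CommRing S] [Group H] [Finite H] [MulSemiringAction H S]
    (hfin : {M : Ideal S | M.IsMaximal}.Finite) (T : AddSubgroup S)
    (hT : ∀ b t : S, (∀ g : H, g • b = b) → t ∈ T → b * t ∈ T)
    (hspan : Ideal.span (T : Set S) = ⊤)
    (hassoc : ∀ t ∈ T, ∀ g : H, ∃ v : S, t = v * (g • t)) :
    ∃ t ∈ T, IsUnit t := by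
  classical
  let B := FixedPoints.subring S H
  have hinv : Algebra.IsInvariant B S H := ⟨fun b hb => ⟨⟨b, hb⟩, rfl⟩⟩
  have hcomm : SMulCommClass H B S := ⟨fun g b s => by
    simp only [Subring.smul_def, smul_eq_mul, smul_mul']
    rw [b.2 g]⟩
  have hint : Algebra.IsIntegral B S := Algebra.IsInvariant.isIntegral B S H
  let F : Set (Ideal B) := (fun M : Ideal S => M.under B) '' {M : Ideal S | M.IsMaximal}
  have hF : F.Finite := hfin.image _
  have : Fintype F := hF.fintype
  have hsel : ∀ n : F, ∃ N : Ideal S, N.IsMaximal ∧ N.under B = n ∧ ∃ t ∈ T, t ∉ N := by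
    rintro ⟨n, N, hN, rfl⟩
    refine ⟨N, hN, rfl, ?_⟩
    by_contra! hcon
    exact hN.ne_top (top_le_iff.mp (hspan ▸ Ideal.span_le.mpr hcon))
  choose N hNmax hNn t htT htN using hsel
  have hFmax : ∀ n : F, n.1.IsMaximal := by
    intro n
    rw [← hNn n]
    have := hNmax n
    exact Ideal.isMaximal_comap_of_isIntegral_of_isMaximal (N n)
  have hcop : Pairwise (Function.onFun IsCoprime (fun n : F => n.1)) := by
    intro n m hnm
    have h1 := hFmax n
    have h2 := hFmax m
    exact Ideal.isCoprime_of_isMaximal (fun h => hnm (Subtype.ext h))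
  have hcrt : ∀ n : F, ∃ e : B, ∀ m : F, e - (if m = n then 1 else 0) ∈ m.1 := fun n =>
    Ideal.exists_forall_sub_mem_ideal hcop _
  choose e he using hcrt
  refine ⟨∑ n, (e n : S) * t n, sum_mem fun n _ => hT _ _ (e n).2 (htT n), ?_⟩
  by_contra hnu
  obtain ⟨M, hM, hmem⟩ := exists_max_ideal_of_mem_nonunits hnu
  let n : F := ⟨M.under B, M, hM, rfl⟩
  have hNn' : (N n).under B = M.under B := hNn n
  have := hNmax n
  obtain ⟨g, hg⟩ := Algebra.IsInvariant.exists_smul_of_under_eq B S H (N n) M hNn'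
  have htM : t n ∉ M := by
    intro h
    rw [hg, Ideal.mem_pointwise_smul_iff_inv_smul_mem] at h
    obtain ⟨v, hv⟩ := hassoc _ (htT n) g⁻¹
    exact htN n (hv ▸ Ideal.mul_mem_left _ _ h)
  apply htM
  have hkey : ∑ m, (e m : S) * t m - t n ∈ M := by
    have : t n = ∑ m, (if n = m then 1 else 0) * t m := by simp
    rw [this]
    rw [← Finset.sum_sub_distrib]
    refine sum_mem fun m _ => ?_
    rw [← sub_mul]
    refine Ideal.mul_mem_right _ _ ?_
    have h := he m n
    have h2 : algebraMap B S (e m - if n = m then 1 else 0) ∈ M := h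
    convert h2 using 1
    split_ifs <;> simp <;> rfl
  have := sub_mem hmem hkey
  simpa using this

lemma mem_of_integral_mul {A K : Type*} [CommRing A] [CommRing K] [Algebra A K]
    (hinj : Function.Injective (algebraMap A K)) {I : Ideal A}
    (hI : Ideal.IsIntegrallyClosedIdeal I) {f y : A} (hf : f ∈ I) {q : K}
    (hq : IsIntegral A q) (h : algebraMap A K y = q * algebraMap A K f) : y ∈ I := by
  rcases subsingleton_or_nontrivial A with hA | hA
  · rw [Subsingleton.elim y 0]; exact I.zero_mem
  have hmem : y ∈ idealIntegralClosure I := by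
    obtain ⟨p₀, hp₀, hpq₀⟩ := hq
    obtain ⟨p, hp, hpq, hdeg⟩ : ∃ p : Polynomial A, p.Monic ∧ Polynomial.aeval q p = 0 ∧
        0 < p.natDegree := by
      refine ⟨p₀ * Polynomial.X, hp₀.mul Polynomial.monic_X, ?_, ?_⟩
      · rw [map_mul, Polynomial.aeval_def, hpq₀, zero_mul]
      · rw [hp₀.natDegree_mul Polynomial.monic_X]; simp
    refine ⟨p.natDegree, hdeg, fun i => p.coeff (p.natDegree - i) * f ^ i, ?_, ?_⟩
    · intro i _
      exact Ideal.mul_mem_left _ _ (Ideal.pow_mem_pow hf i)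
    · apply hinj
      rw [map_zero]
      set k := p.natDegree with hk
      have h1 : ∑ i ∈ Finset.Icc 1 k, p.coeff (k - i) * f ^ i * y ^ (k - i)
          = ∑ j ∈ Finset.range k, p.coeff j * f ^ (k - j) * y ^ j := by
        refine Finset.sum_nbij' (fun i => k - i) (fun j => k - j) ?_ ?_ ?_ ?_ ?_
        · intro i hi; simp at hi ⊢; omega
        · intro i hi; simp at hi ⊢; omega
        · intro i hi; simp at hi ⊢; omega
        · intro i hi; simp at hi ⊢; omega
        · intro i hi
          simp at hi
          have : k - (k - i) = i := by omega
          simp [this]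
      rw [h1]
      have h2 : algebraMap A K f ^ k * Polynomial.aeval q p = 0 := by rw [hpq, mul_zero]
      rw [Polynomial.aeval_eq_sum_range, ← hk, Finset.sum_range_succ, hk, hp.coeff_natDegree, ← hk,
        mul_add, Finset.mul_sum] at h2
      rw [← h2, add_comm, map_add, map_sum]
      congr 1
      · refine Finset.sum_congr rfl fun j hj => ?_
        simp only [Finset.mem_range] at hj
        rw [map_mul, map_mul, map_pow, map_pow, h, Algebra.smul_def, mul_pow]
        obtain ⟨d, hd⟩ := Nat.exists_eq_add_of_lt hj
        have : k - j = d + 1 := by omega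
        rw [this, hd]
        ring
      · rw [map_pow, h, one_smul]; ring
  rw [hI] at hmem
  exact hmem

lemma invariant_isInvariant {R : Type*} [CommRing R] (G : Subgroup (R ≃+* R)) :
    Algebra.IsInvariant (invariantSubring G) R G :=
  ⟨fun b hb => ⟨⟨b, fun σ hσ => hb ⟨σ, hσ⟩⟩, rfl⟩⟩

lemma nilp_of_mul {R : Type*} [CommRing R] (G : Subgroup (R ≃+* R)) [Finite G]
    (x : invariantSubring G) (hx : x ∈ nonZeroDivisors (invariantSubring G)) (s : R)
    (hs : (x : R) * s = 0) : IsNilpotent s := by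
  classical
  cases nonempty_fintype G
  let A : Ideal R := Ideal.span {(x : R)} |>.annihilator
  have hA : ∀ r, r ∈ A ↔ (x : R) * r = 0 := by
    intro r
    rw [mul_comm]
    simp [A]
  let q := MulSemiringAction.charpoly G s
  have hq : q.map (Ideal.Quotient.mk A) = Polynomial.X ^ Fintype.card G := by
    simp only [q, MulSemiringAction.charpoly_eq, Polynomial.map_prod, Polynomial.map_sub,
      Polynomial.map_X, Polynomial.map_C]
    have : ∀ g : G, Ideal.Quotient.mk A (g • s) = 0 := by
      intro g
      rw [Ideal.Quotient.eq_zero_iff_mem, hA]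
      have h1 : g.1 (x : R) = x := x.2 g.1 g.2
      have h2 : g.1 ((x : R) * s) = 0 := by rw [hs, map_zero]
      rw [map_mul, h1] at h2
      exact h2
    simp [this]
  have hinv : ∀ i, q.coeff i ∈ invariantSubring G := fun i σ hσ =>
    MulSemiringAction.smul_coeff_charpoly (G := G) s i ⟨σ, hσ⟩
  have hcoeff : ∀ i, i ≠ Fintype.card G → q.coeff i = 0 := by
    intro i hi
    have h1 : Ideal.Quotient.mk A (q.coeff i) = 0 := by
      rw [← Polynomial.coeff_map, hq, Polynomial.coeff_X_pow, if_neg hi]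
    rw [Ideal.Quotient.eq_zero_iff_mem, hA] at h1
    have h2 : x * (⟨q.coeff i, hinv i⟩ : invariantSubring G) = 0 := Subtype.ext h1
    have h3 := (mem_nonZeroDivisors_iff.mp hx).1 _ h2
    exact congrArg Subtype.val h3
  have heval : q.eval s = 0 := MulSemiringAction.eval_charpoly G s
  refine ⟨Fintype.card G, ?_⟩
  have hmon : q.Monic := MulSemiringAction.monic_charpoly G s
  rcases subsingleton_or_nontrivial R with hR | hR
  · exact Subsingleton.elim _ _
  have hdeg : q.natDegree = Fintype.card G := by
    by_contra h
    have := hcoeff _ h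
    rw [hmon.coeff_natDegree] at this
    exact one_ne_zero this
  rw [Polynomial.eval_eq_sum_range, Finset.sum_range_succ, hmon.coeff_natDegree, hdeg, one_mul,
    Finset.sum_eq_zero, zero_add] at heval
  · exact heval
  · intro i hi
    rw [hcoeff i (by simp at hi; omega), zero_mul]

lemma nzd_of_nzd (R : Type*) [CommRing R] [IsNoetherianRing R]
    (hCM : ∀ (M : Ideal R) [M.IsMaximal],
      ringKrullDim (Localization.AtPrime M) = 1 ∧
        RingDepthGE (Localization.AtPrime M) 1)
    (G : Subgroup (R ≃+* R)) [Finite G]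
    (x : invariantSubring G) (hx : x ∈ nonZeroDivisors (invariantSubring G)) :
    (x : R) ∈ nonZeroDivisors R := by
  by_contra hcon
  have h0 : (x : R) ∈ (nonZeroDivisors R : Set R)ᶜ := hcon
  rw [← biUnion_associatedPrimes_eq_compl_nonZeroDivisors] at h0
  simp only [Set.mem_iUnion, SetLike.mem_coe, exists_prop] at h0
  obtain ⟨P, hP, hxP⟩ := h0
  rw [AssociatedPrimes.mem_iff, isAssociatedPrime_iff] at hP
  obtain ⟨hPp, r, hr⟩ := hP
  have hPr : ∀ y, y ∈ P ↔ y * r = 0 := by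
    intro y; rw [hr]; simp [Submodule.mem_colon_singleton]
  by_cases hmin : P ∈ minimalPrimes R
  · have h1 : (x : R) ∈ ⋃ p ∈ (⊥ : Ideal R).minimalPrimes, (p : Set R) := by
      simp only [Set.mem_iUnion, SetLike.mem_coe, exists_prop]
      exact ⟨P, hmin, hxP⟩
    rw [Ideal.iUnion_minimalPrimes] at h1
    obtain ⟨y, hy, n, hn⟩ := h1
    apply hy
    rw [Ideal.mem_bot, mul_pow] at hn
    obtain ⟨k, hk⟩ := nilp_of_mul G (x ^ n) (pow_mem hx n) (y ^ n) (by simpa using hn)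
    exact ⟨n * k, by rw [pow_mul, hk]; simp⟩
  · obtain ⟨M, hM, hPM⟩ := Ideal.exists_le_maximal P hPp.ne_top
    obtain ⟨Q, hQmin, hQP⟩ := Ideal.exists_minimalPrimes_le (I := (⊥ : Ideal R)) (J := P) bot_le
    have hQp : Q.IsPrime := hQmin.1.1
    have hQP' : Q < P := lt_of_le_of_ne hQP (fun h => hmin (h ▸ hQmin))
    have hdim := (hCM M).1
    rw [IsLocalization.AtPrime.ringKrullDim_eq_height M] at hdim
    have hht : M.height ≤ ((1 : ℕ) : ℕ∞) := by
      have : (M.height : WithBot ℕ∞) ≤ ((1 : ℕ∞) : WithBot ℕ∞) := hdim.le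
      exact_mod_cast this
    have hPeq : P = M := by
      by_contra hne
      have h1 := (Ideal.height_le_iff.mp hht) P hPp (lt_of_le_of_ne hPM hne)
      have h2 : P.height ≤ ((0 : ℕ) : ℕ∞) := by
        have : P.height = 0 := by simpa using h1
        simp [this]
      have h3 := (Ideal.height_le_iff.mp h2) Q hQp hQP'
      simp at h3
    subst hPeq
    obtain ⟨xs, hlen, hmax, hreg⟩ := (hCM P).2
    obtain ⟨y, rfl⟩ := List.length_eq_one_iff.mp hlen
    have hy := hmax y (by simp)
    have hreg0 : IsSMulRegular (Localization.AtPrime P ⧸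
        Ideal.span {w : Localization.AtPrime P | w ∈ [y].take 0}) y := hreg 0 (by simp)
    have hyreg : ∀ z : Localization.AtPrime P, y * z = 0 → z = 0 := by
      intro z hz
      have := hreg0 (a₁ := Ideal.Quotient.mk _ z) (a₂ := 0) (by
        show Ideal.Quotient.mk _ (y * z) = y • 0
        rw [smul_zero, hz, map_zero])
      rw [Ideal.Quotient.eq_zero_iff_mem] at this
      simpa using this
    obtain ⟨c, d, rfl⟩ := IsLocalization.exists_mk'_eq P.primeCompl y
    rw [IsLocalization.AtPrime.mk'_mem_maximal_iff _ P] at hy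
    have hr0 : algebraMap R (Localization.AtPrime P) r = 0 := by
      apply hyreg
      rw [← IsLocalization.mk'_one (M := P.primeCompl), ← IsLocalization.mk'_mul, (hPr c).mp hy,
        IsLocalization.mk'_zero]
    rw [IsLocalization.map_eq_zero_iff P.primeCompl] at hr0
    obtain ⟨m, hm⟩ := hr0
    exact m.2 ((hPr _).mpr hm)

lemma sup_pow_le {R : Type*} [CommRing R] (J L : Ideal R) (k : ℕ) :
    (J ⊔ L) ^ (k + 1) ≤ J * (J ⊔ L) ^ k ⊔ L ^ (k + 1) := by
  induction k with
  | zero => simp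
  | succ k ih =>
    rw [pow_succ']
    calc (J ⊔ L) * (J ⊔ L) ^ (k + 1) = J * (J ⊔ L) ^ (k + 1) ⊔ L * (J ⊔ L) ^ (k + 1) := by
          rw [Ideal.sup_mul]
      _ ≤ _ := by
          refine sup_le le_sup_left ?_
          calc L * (J ⊔ L) ^ (k + 1) ≤ L * (J * (J ⊔ L) ^ k ⊔ L ^ (k + 1)) :=
                Ideal.mul_mono_right ih
            _ = J * (L * (J ⊔ L) ^ k) ⊔ L ^ (k + 2) := by
                rw [Ideal.mul_sup, ← pow_succ', mul_left_comm]
            _ ≤ _ := by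
                refine sup_le_sup_right (Ideal.mul_mono_right ?_) _
                rw [pow_succ']
                exact Ideal.mul_mono_left le_sup_right

lemma red_trans {R : Type*} [CommRing R] {E J L : Ideal R} {n k : ℕ} (hJL : J ≤ L)
    (h1 : J ^ (n + 1) ≤ E * J ^ n) (h2 : L ^ (k + 1) ≤ J * L ^ k) :
    L ^ (n + k + 1) ≤ E * L ^ (n + k) := by
  have h3 : ∀ j, L ^ (k + j) ≤ J ^ j * L ^ k := by
    intro j
    induction j with
    | zero => simp
    | succ j ih =>
      calc L ^ (k + (j + 1)) = L * L ^ (k + j) := by rw [← pow_succ']; rfl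
        _ ≤ L * (J ^ j * L ^ k) := Ideal.mul_mono_right ih
        _ = J ^ j * L ^ (k + 1) := by ring
        _ ≤ J ^ j * (J * L ^ k) := Ideal.mul_mono_right h2
        _ = _ := by ring
  calc L ^ (n + k + 1) = L ^ (k + (n + 1)) := by congr 1; ring
    _ ≤ J ^ (n + 1) * L ^ k := h3 _
    _ ≤ E * J ^ n * L ^ k := Ideal.mul_mono_left h1
    _ = E * (J ^ n * L ^ k) := by ring
    _ ≤ E * (L ^ n * L ^ k) := Ideal.mul_mono_right (Ideal.mul_mono_left (Ideal.pow_right_mono hJL n))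
    _ = _ := by rw [pow_add]

lemma red_sup {R : Type*} [CommRing R] {E J L : Ideal R} {n m : ℕ}
    (h1 : J ^ (n + 1) ≤ E * J ^ n) (h2 : L ^ (m + 1) ≤ E * L ^ m) :
    (J ⊔ L) ^ (n + m + 1) ≤ E * (J ⊔ L) ^ (n + m) := by
  have h1' : ∀ j, J ^ (n + 1 + j) ≤ E * J ^ (n + j) := fun j => by
    rw [pow_add J (n + 1) j, pow_add J n j, ← mul_assoc]; exact Ideal.mul_mono_left h1
  have h2' : ∀ j, L ^ (m + 1 + j) ≤ E * L ^ (m + j) := fun j => by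
    rw [pow_add L (m + 1) j, pow_add L m j, ← mul_assoc]; exact Ideal.mul_mono_left h2
  have key : ∀ i j, i + j = n + m → J ^ i * L ^ j ≤ (J ⊔ L) ^ (n + m) := by
    intro i j hij
    rw [← hij, pow_add]
    exact Ideal.mul_mono (Ideal.pow_right_mono le_sup_left _) (Ideal.pow_right_mono le_sup_right _)
  have : (J ⊔ L) ^ (n + m + 1) = (J + L) ^ (n + m + 1) := rfl
  rw [this, add_pow, Ideal.sum_eq_sup]
  refine Finset.sup_le fun i hi => ?_
  refine le_trans (Ideal.mul_le_left (I := J ^ i * L ^ (n + m + 1 - i))) ?_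
  simp only [Finset.mem_range] at hi
  by_cases hin : n + 1 ≤ i
  · obtain ⟨d, rfl⟩ := Nat.exists_eq_add_of_le hin
    calc _ ≤ (E * J ^ (n + d)) * L ^ (n + m + 1 - (n + 1 + d)) := Ideal.mul_mono_left (h1' d)
      _ = E * (J ^ (n + d) * L ^ (n + m + 1 - (n + 1 + d))) := by ring
      _ ≤ _ := Ideal.mul_mono_right (key _ _ (by omega))
  · obtain ⟨d, hd⟩ := Nat.exists_eq_add_of_le (show m + 1 ≤ n + m + 1 - i by omega)
    rw [hd]
    calc _ ≤ J ^ i * (E * L ^ (m + d)) := Ideal.mul_mono_right (h2' d)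
      _ = E * (J ^ i * L ^ (m + d)) := by ring
      _ ≤ _ := Ideal.mul_mono_right (key _ _ (by omega))

lemma exists_closure {R : Type*} [CommRing R] [IsNoetherianRing R] (E : Ideal R) :
    ∃ J : Ideal R, E ≤ J ∧ (∃ m, J ^ (m + 1) ≤ E * J ^ m) ∧ Ideal.IsIntegrallyClosedIdeal J ∧
      ∀ σ : R ≃+* R, E.map (σ : R →+* R) ≤ E → J.map (σ : R →+* R) ≤ J := by
  let P : Set (Ideal R) := {L | E ≤ L ∧ ∃ m, L ^ (m + 1) ≤ E * L ^ m}
  have hne : P.Nonempty := ⟨E, le_rfl, 0, by simp⟩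
  obtain ⟨J, ⟨hEJ, m, hm⟩, hmax⟩ := set_has_maximal_iff_noetherian.mpr
    (inferInstance : IsNoetherian R R) P hne
  have hmax' : ∀ L ∈ P, J ≤ L → L ≤ J := by
    intro L hL hJL
    by_contra h
    exact hmax L hL (lt_of_le_not_ge hJL h)
  refine ⟨J, hEJ, ⟨m, hm⟩, ?_, ?_⟩
  · apply Set.Subset.antisymm
    · rintro r ⟨n, hn, c, hc, hsum⟩
      obtain ⟨k, rfl⟩ := Nat.exists_eq_succ_of_ne_zero hn.ne'
      have hrJ : J ⊔ Ideal.span {r} ≤ J := by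
        refine hmax' _ ⟨hEJ.trans le_sup_left, m + k, red_trans le_sup_left hm ?_⟩ le_sup_left
        refine (sup_pow_le J _ k).trans (sup_le le_rfl ?_)
        rw [Ideal.span_singleton_pow, Ideal.span_singleton_le_iff_mem]
        have hr : r ^ (k + 1) = - ∑ i ∈ Finset.Icc 1 (k + 1), c i * r ^ (k + 1 - i) :=
          eq_neg_of_add_eq_zero_left hsum
        rw [hr]
        refine neg_mem (sum_mem fun i hi => ?_)
        have hci := hc i hi
        simp only [Finset.mem_Icc] at hi
        obtain ⟨d, rfl⟩ := Nat.exists_eq_add_of_le hi.1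
        have hle : J ^ (1 + d) * (J ⊔ Ideal.span {r}) ^ (k + 1 - (1 + d)) ≤
            J * (J ⊔ Ideal.span {r}) ^ k := by
          have : k = d + (k + 1 - (1 + d)) := by omega
          conv_rhs => rw [this, pow_add]
          rw [pow_add, pow_one, mul_assoc]
          exact Ideal.mul_mono_right (Ideal.mul_mono_left (Ideal.pow_right_mono le_sup_left d))
        refine hle (Ideal.mul_mem_mul hci (Ideal.pow_mem_pow ?_ _))
        exact Ideal.mem_sup_right (Ideal.mem_span_singleton_self r)
      exact hrJ (Ideal.mem_sup_right (Ideal.mem_span_singleton_self r))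
    · intro r hr
      refine ⟨1, one_pos, fun _ => -r, ?_, by simp⟩
      intro i hi
      simp at hi
      subst hi
      simpa using hr
  · intro σ hσ
    have h1 : (Ideal.map (σ : R →+* R) J) ^ (m + 1) ≤ E * (Ideal.map (σ : R →+* R) J) ^ m := by
      rw [← Ideal.map_pow, ← Ideal.map_pow]
      refine (Ideal.map_mono hm).trans ?_
      rw [Ideal.map_mul]
      exact Ideal.mul_mono_left hσ
    exact le_sup_right.trans (hmax' _ ⟨hEJ.trans le_sup_left, _, red_sup hm h1⟩ le_sup_left)

lemma fg_of_denom {R K : Type*} [CommRing R] [IsNoetherianRing R] [CommRing K] [Algebra R K]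
    (W : Submodule R K) (c : R) (hc : IsUnit (algebraMap R K c))
    (h : ∀ q ∈ W, ∃ y, algebraMap R K y = q * algebraMap R K c) : W.FG := by
  obtain ⟨u, hu⟩ := hc
  refine Submodule.FG.of_le (Submodule.fg_span_singleton (↑u⁻¹ : K)) fun q hq => ?_
  obtain ⟨y, hy⟩ := h q hq
  rw [Submodule.mem_span_singleton]
  refine ⟨y, ?_⟩
  rw [Algebra.smul_def, hy, ← hu, mul_assoc, Units.mul_inv, mul_one]

lemma integral_of_stable {R K : Type*} [CommRing R] [IsNoetherianRing R] [CommRing K] [Algebra R K]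
    (N : Ideal R) (c : R) (hcN : c ∈ N) (hc : IsUnit (algebraMap R K c)) (q : K)
    (h : ∀ z ∈ N, ∃ w ∈ N, algebraMap R K w = q * algebraMap R K z) : IsIntegral R q := by
  let S : Subalgebra R K :=
    { carrier := {q | ∀ z ∈ N, ∃ w ∈ N, algebraMap R K w = q * algebraMap R K z}
      mul_mem' := by
        intro p q hp hq z hz
        obtain ⟨w, hw, hw'⟩ := hq z hz
        obtain ⟨v, hv, hv'⟩ := hp w hw
        exact ⟨v, hv, by rw [hv', hw', mul_assoc]⟩
      add_mem' := by
        intro p q hp hq z hz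
        obtain ⟨w, hw, hw'⟩ := hq z hz
        obtain ⟨v, hv, hv'⟩ := hp z hz
        exact ⟨v + w, add_mem hv hw, by rw [map_add, hv', hw', add_mul]⟩
      algebraMap_mem' := by
        intro r z hz
        exact ⟨r * z, N.mul_mem_left _ hz, by rw [map_mul]⟩ }
  refine IsIntegral.of_mem_of_fg S (fg_of_denom _ c hc ?_) q h
  intro q hq
  obtain ⟨w, _, hw⟩ := hq c hcN
  exact ⟨w, hw⟩

lemma finite_max {R S : Type*} [CommRing R] [CommRing S] [Algebra R S] [Module.Finite R S]
    (hsemi : {M : Ideal R | M.IsMaximal}.Finite) : {M : Ideal S | M.IsMaximal}.Finite := by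
  refine (hsemi.biUnion (t := fun M => M.primesOver S)
    fun M _ => Algebra.QuasiFinite.finite_primesOver M).subset ?_
  intro N hN
  have hN' : N.IsMaximal := hN
  simp only [Set.mem_iUnion]
  exact ⟨N.under R, Ideal.isMaximal_comap_of_isIntegral_of_isMaximal N, hN'.isPrime, ⟨rfl⟩⟩

lemma main_red {R K : Type*} [CommRing R] [IsNoetherianRing R] [CommRing K] [Algebra R K]
    (hinj : Function.Injective (algebraMap R K))
    (hsemi : {M : Ideal R | M.IsMaximal}.Finite)
    (G : Subgroup (R ≃+* R)) [Finite G] [MulSemiringAction G K]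
    (hact : ∀ (g : G) (r : R), g • algebraMap R K r = algebraMap R K (g • r))
    (a : R) (hau : IsUnit (algebraMap R K a))
    (hW : ∀ p q : K, IsIntegral R p → IsIntegral R q →
      (∃ y, algebraMap R K y = p * algebraMap R K a) →
      (∃ y, algebraMap R K y = q * algebraMap R K a) →
      ∃ y, algebraMap R K y = p * q * algebraMap R K a)
    (J : Ideal R)
    (hJ2 : ∀ y ∈ J, ∃ q : K, IsIntegral R q ∧ algebraMap R K y = q * algebraMap R K a)
    (haJ : a ∈ J) (hGJ : ∀ (g : G), ∀ y ∈ J, g • y ∈ J)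
    (I : Ideal (invariantSubring G)) (hI : Ideal.IsIntegrallyClosedIdeal I)
    (hIJ : I.map (invariantSubring G).subtype ≤ J)
    (m : ℕ) (hm : J ^ (m + 1) ≤ I.map (invariantSubring G).subtype * J ^ m) :
    ∃ f ∈ I, I ^ 2 = Ideal.span {f} * I := by
  classical
  set φ := algebraMap R K with hφ
  have hcancel : ∀ p q : K, p * φ a = q * φ a → p = q := fun p q h => hau.mul_right_cancel h
  have := invariant_isInvariant G
  have hAint : Algebra.IsIntegral (invariantSubring G) R :=
    Algebra.IsInvariant.isIntegral (invariantSubring G) R G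
  have hinjA : Function.Injective (algebraMap (invariantSubring G) K) := by
    rw [IsScalarTower.algebraMap_eq (invariantSubring G) R K]
    exact hinj.comp Subtype.val_injective
  let S : Subalgebra R K :=
    { carrier := {q | IsIntegral R q ∧ ∃ y, φ y = q * φ a}
      mul_mem' := fun {p q} hp hq => ⟨hp.1.mul hq.1, hW p q hp.1 hq.1 hp.2 hq.2⟩
      add_mem' := by
        rintro p q ⟨hp, y, hy⟩ ⟨hq, z, hz⟩
        exact ⟨hp.add hq, y + z, by rw [map_add, hy, hz, add_mul]⟩
      algebraMap_mem' := fun r => ⟨isIntegral_algebraMap, r * a, by rw [map_mul]⟩ }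
  have hSfin : Module.Finite R S := by
    have : (Subalgebra.toSubmodule S).FG := fg_of_denom _ a hau fun q hq => hq.2
    exact Module.Finite.iff_fg.mpr this
  have hSmax := finite_max (S := S) hsemi
  have hJS : ∀ y ∈ J, ∃ s : S, φ y = s * φ a := by
    intro y hy
    obtain ⟨q, hq, hqa⟩ := hJ2 y hy
    exact ⟨⟨q, hq, y, hqa⟩, hqa⟩
  have hstab : ∀ (g : G) (q : K), q ∈ S → g • q ∈ S := by
    intro g q hq
    refine ⟨?_, ?_⟩
    · have := IsIntegral.map_of_comp_eq (R := R) (T := R) (g.1 : R →+* R)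
        (MulSemiringAction.toRingHom G K g) (by
          ext r
          exact (hact g r).symm) hq.1
      exact this
    · obtain ⟨w, hw⟩ := hJS _ (hGJ g⁻¹ a haJ)
      obtain ⟨y, hy⟩ := (S.mul_mem w.2 hq).2
      refine ⟨g • y, ?_⟩
      have h2 : φ y = q * φ (g⁻¹ • a) := by rw [hw, hy]; ring
      rw [← hact, h2, smul_mul', hact, smul_inv_smul]
  let actS : MulSemiringAction G S :=
    { smul := fun g s => ⟨g • s.1, hstab g s.1 s.2⟩
      one_smul := fun s => Subtype.ext (one_smul G s.1)
      mul_smul := fun g h s => Subtype.ext (mul_smul g h s.1)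
      smul_zero := fun g => Subtype.ext (smul_zero g)
      smul_add := fun g s t => Subtype.ext (smul_add g s.1 t.1)
      smul_one := fun g => Subtype.ext (smul_one g)
      smul_mul := fun g s t => Subtype.ext (smul_mul' g s.1 t.1) }
  have hsmul : ∀ (g : G) (s : S), ((g • s : S) : K) = g • (s : K) := fun _ _ => rfl
  have hfix : ∀ (g : G) (f : invariantSubring G), g • (f : R) = f := fun g f => f.2 g.1 g.2
  let T : AddSubgroup S :=
    { carrier := {s | ∃ f ∈ I, φ (f : R) = s * φ a}
      zero_mem' := ⟨0, I.zero_mem, by simp⟩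
      add_mem' := by
        rintro s t ⟨f, hf, hf'⟩ ⟨h, hh, hh'⟩
        refine ⟨f + h, add_mem hf hh, ?_⟩
        push_cast
        rw [map_add, hf', hh', add_mul]
      neg_mem' := by
        rintro s ⟨f, hf, hf'⟩
        refine ⟨-f, neg_mem hf, ?_⟩
        push_cast
        rw [map_neg, hf', neg_mul] }
  have hT : ∀ b t : S, (∀ g : G, g • b = b) → t ∈ T → b * t ∈ T := by
    rintro b t hb ⟨f, hf, hft⟩
    obtain ⟨y, hy⟩ := (b * t).2.2
    have hy' : φ y = b * φ f := by rw [hy, hft]; push_cast; ring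
    have hyA : y ∈ invariantSubring G := by
      intro σ hσ
      apply hinj
      have h1 := hact ⟨σ, hσ⟩ y
      change _ = φ (σ y) at h1
      change φ (σ y) = φ y
      rw [← h1, hy', smul_mul', ← hsmul, hb, hact, hfix]
    refine ⟨⟨y, hyA⟩, ?_, hy⟩
    exact mem_of_integral_mul (K := K) hinjA hI hf (isIntegral_trans (A := R) (b : K) b.2.1) hy'
  have hspan : Ideal.span (T : Set S) = ⊤ := by
    have hpow : ∀ k : ℕ, ∀ z ∈ J ^ k, ∃ s : S, φ z = s * φ a ^ k := by
      intro k
      induction k with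
      | zero => intro z _; exact ⟨algebraMap R S z, by simp; rfl⟩
      | succ k ih =>
        intro z hz
        rw [pow_succ] at hz
        refine Submodule.mul_induction_on hz ?_ ?_
        · intro u hu v hv
          obtain ⟨s, hs⟩ := ih u hu
          obtain ⟨t, ht⟩ := hJS v hv
          exact ⟨s * t, by rw [map_mul, hs, ht]; push_cast; ring⟩
        · rintro u v ⟨s, hs⟩ ⟨t, ht⟩
          exact ⟨s + t, by rw [map_add, hs, ht]; push_cast; ring⟩
    have hE : ∀ z ∈ I.map (invariantSubring G).subtype, ∃ s ∈ Ideal.span (T : Set S),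
        φ z = s * φ a := by
      intro z hz
      refine Submodule.span_induction ?_ ?_ ?_ ?_ hz
      · rintro _ ⟨f, hf, rfl⟩
        obtain ⟨s, hs⟩ := hJS _ (hIJ (Ideal.mem_map_of_mem _ hf))
        exact ⟨s, Ideal.subset_span ⟨f, hf, hs⟩, hs⟩
      · exact ⟨0, zero_mem _, by simp⟩
      · rintro u v _ _ ⟨s, hs, hs'⟩ ⟨t, ht, ht'⟩
        exact ⟨s + t, add_mem hs ht, by rw [map_add, hs', ht']; push_cast; ring⟩
      · rintro r u _ ⟨s, hs, hs'⟩
        refine ⟨algebraMap R S r * s, Ideal.mul_mem_left _ _ hs, ?_⟩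
        rw [smul_eq_mul, map_mul, hs', ← mul_assoc]
        rfl
    have hEJ : ∀ z ∈ I.map (invariantSubring G).subtype * J ^ m, ∃ s ∈ Ideal.span (T : Set S),
        φ z = s * φ a ^ (m + 1) := by
      intro z hz
      refine Submodule.mul_induction_on hz ?_ ?_
      · intro u hu v hv
        obtain ⟨s, hs, hs'⟩ := hE u hu
        obtain ⟨t, ht⟩ := hpow m v hv
        exact ⟨s * t, Ideal.mul_mem_right _ _ hs, by rw [map_mul, hs', ht]; push_cast; ring⟩
      · rintro u v ⟨s, hs, hs'⟩ ⟨t, ht, ht'⟩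
        exact ⟨s + t, add_mem hs ht, by rw [map_add, hs', ht']; push_cast; ring⟩
    obtain ⟨s, hs, hs'⟩ := hEJ _ (hm (Ideal.pow_mem_pow haJ (m + 1)))
    have h1 : (s : K) = 1 := by
      apply (hau.pow (m + 1)).mul_right_cancel
      rw [← hs', map_pow, one_mul]
    rw [Ideal.eq_top_iff_one]
    have : s = 1 := Subtype.ext h1
    rwa [← this]
  have hassoc : ∀ t ∈ T, ∀ g : G, ∃ v : S, t = v * (g • t) := by
    rintro t ⟨f, hf, hft⟩ g
    obtain ⟨w, hw⟩ := hJS _ (hGJ g a haJ)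
    refine ⟨w, Subtype.ext (hcancel _ _ ?_)⟩
    rw [← hft]
    push_cast
    rw [hsmul]
    have h1 : φ (f : R) = g • (φ (f : R)) := by rw [hact, hfix]
    rw [h1, hft, smul_mul', hact, hw]
    ring
  obtain ⟨t, ⟨f, hf, hft⟩, u, hu⟩ := crt_unit hSmax T hT hspan hassoc
  refine ⟨f, hf, ?_⟩
  have htu : ((↑u⁻¹ : S) : K) * (t : K) = 1 := by
    rw [← hu]
    have : (↑u⁻¹ : S) * (u : S) = 1 := u.inv_mul
    exact congrArg Subtype.val this
  have hcf : ∀ p q : K, p * φ f = q * φ f → p = q := by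
    intro p q h
    have : IsUnit (φ (f : R)) := by
      rw [hft]
      exact (IsUnit.of_mul_eq_one_right _ htu).mul hau
    exact this.mul_right_cancel h
  apply le_antisymm
  · rw [pow_two, Ideal.mul_le]
    intro i hi j hj
    obtain ⟨si, hsi⟩ := hJS _ (hIJ (Ideal.mem_map_of_mem _ hi))
    obtain ⟨sj, hsj⟩ := hJS _ (hIJ (Ideal.mem_map_of_mem _ hj))
    change φ (i : R) = _ at hsi
    change φ (j : R) = _ at hsj
    let b : S := si * (↑u⁻¹ : S)
    have hb : φ (i : R) = b * φ f := by
      rw [hsi, hft]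
      have : ((b : S) : K) = si * ((↑u⁻¹ : S) : K) := rfl
      rw [this]
      linear_combination (- (si : K) * φ a) * htu
    have hbinv : ∀ g : G, g • b = b := by
      intro g
      apply Subtype.ext
      apply hcf
      rw [← hb, hsmul]
      have h1 : φ (i : R) = g • (φ (i : R)) := by rw [hact, hfix]
      rw [h1, hb, smul_mul', hact, hfix]
    obtain ⟨f', hf', hff'⟩ := hT b sj hbinv ⟨j, hj, hsj⟩
    have : i * j = f * f' := by
      apply Subtype.ext
      apply hinj
      push_cast
      rw [map_mul, map_mul, hff', hb, hsj]
      push_cast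
      ring
    rw [this]
    exact Ideal.mul_mem_mul (Ideal.mem_span_singleton_self f) hf'
  · rw [pow_two]
    exact Ideal.mul_mono_left ((Ideal.span_singleton_le_iff_mem _).mpr hf)
/-- Let `R` be a Noetherian semi-local Arf ring whose localizations at maximal ideals
are one-dimensional Cohen–Macaulay local rings.  Then for every finite subgroup `G` of
the ring automorphisms of `R` whose order is invertible in `R`, the invariant subring
`R^G` is an Arf ring. -/
theorem arf_invariantSubring (R : Type*) [CommRing R] [IsNoetherianRing R]
    (hsemi : {M : Ideal R | M.IsMaximal}.Finite)
    (hCM : ∀ (M : Ideal R) [M.IsMaximal],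
      ringKrullDim (Localization.AtPrime M) = 1 ∧
        RingDepthGE (Localization.AtPrime M) 1)
    (hArf : IsArfRing R)
    (G : Subgroup (R ≃+* R)) [Finite G] (hord : IsUnit ((Nat.card G : R))) :
    IsArfRing (invariantSubring G) := by
  have hnz : ∀ x : invariantSubring G, x ∈ nonZeroDivisors (invariantSubring G) →
      (x : R) ∈ nonZeroDivisors R := nzd_of_nzd R hCM G
  refine ⟨?_, ?_⟩
  · rintro I hI ⟨x, hxI, hx⟩
    have hxR := hnz x hx
    let actK : MulSemiringAction G (FractionRing R) :=
      MulSemiringAction.compHom (FractionRing R)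
        ((IsFractionRing.ringEquivOfRingEquivHom R (FractionRing R)).comp G.subtype)
    have hact : ∀ (g : G) (r : R), g • algebraMap R (FractionRing R) r
        = algebraMap R (FractionRing R) (g • r) := by
      intro g r
      exact IsFractionRing.ringEquivOfRingEquiv_algebraMap (g : R ≃+* R) r
    obtain ⟨J, hEJ, ⟨m, hm⟩, hJ, hst⟩ := exists_closure (I.map (invariantSubring G).subtype)
    have hxJ : (x : R) ∈ J := hEJ (Ideal.mem_map_of_mem (invariantSubring G).subtype hxI)
    obtain ⟨n, a, haJ, hred⟩ := hArf.1 J hJ ⟨x, hxJ, hxR⟩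
    have ha : a ∈ nonZeroDivisors R := by
      have h1 : (x : R) ^ (n + 1) ∈ Ideal.span {a} * J ^ n := by
        rw [← hred]; exact Ideal.pow_mem_pow hxJ _
      obtain ⟨w, _, hw⟩ := Ideal.mem_span_singleton_mul.1 h1
      have h2 : a * w ∈ nonZeroDivisors R := by
        rw [hw]; exact pow_mem hxR _
      exact (mul_mem_nonZeroDivisors.1 h2).1
    have hau : IsUnit (algebraMap R (FractionRing R) a) :=
      IsLocalization.map_units (FractionRing R) (⟨a, ha⟩ : nonZeroDivisors R)
    have hmk : ∀ (q : FractionRing R) (y : R),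
        algebraMap R (FractionRing R) y = q * algebraMap R (FractionRing R) a →
        IsLocalization.mk' (FractionRing R) y (⟨a, ha⟩ : nonZeroDivisors R) = q := by
      intro q y h
      rw [IsLocalization.mk'_eq_iff_eq_mul]
      exact h
    have hinj : Function.Injective (algebraMap R (FractionRing R)) :=
      IsFractionRing.injective R (FractionRing R)
    have hstab : ∀ (g : G), ∀ y ∈ J, g • y ∈ J := by
      intro g y hy
      refine hst (g : R ≃+* R) ?_ (Ideal.mem_map_of_mem ((g : R ≃+* R) : R →+* R) hy)
      rw [Ideal.map_map, Ideal.map_le_iff_le_comap]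
      intro b hb
      have h3 : ((g : R ≃+* R) : R →+* R) ((invariantSubring G).subtype b) = b :=
        b.2 g g.2
      change ((g : R ≃+* R) : R →+* R) ((invariantSubring G).subtype b) ∈ Ideal.map (invariantSubring G).subtype I
      rw [h3]
      exact Ideal.mem_map_of_mem (invariantSubring G).subtype hb
    have hW : ∀ p q : FractionRing R, IsIntegral R p → IsIntegral R q →
        (∃ y, algebraMap R (FractionRing R) y = p * algebraMap R (FractionRing R) a) →
        (∃ y, algebraMap R (FractionRing R) y = q * algebraMap R (FractionRing R) a) →
        ∃ y, algebraMap R (FractionRing R) y = p * q * algebraMap R (FractionRing R) a := by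
      rintro p q hp hq ⟨y, hy⟩ ⟨z, hz⟩
      have h4 := hArf.2 a y z ha (by rw [hmk p y hy]; exact hp) (by rw [hmk q z hz]; exact hq)
      obtain ⟨r, hr⟩ := Ideal.mem_span_singleton'.1 h4
      refine ⟨r, ?_⟩
      apply hau.mul_right_cancel
      rw [← map_mul, hr, map_mul, hy, hz]
      ring
    have hJ2 : ∀ y ∈ J, ∃ q : FractionRing R, IsIntegral R q ∧
        algebraMap R (FractionRing R) y = q * algebraMap R (FractionRing R) a := by
      intro y hy
      have hq : algebraMap R (FractionRing R) y
          = IsLocalization.mk' (FractionRing R) y (⟨a, ha⟩ : nonZeroDivisors R)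
            * algebraMap R (FractionRing R) a :=
        (IsLocalization.mk'_spec (FractionRing R) y (⟨a, ha⟩ : nonZeroDivisors R)).symm
      refine ⟨_, ?_, hq⟩
      refine integral_of_stable (J ^ n) (a ^ n) (Ideal.pow_mem_pow haJ n)
        (by rw [map_pow]; exact hau.pow n) _ ?_
      intro z hz
      have h5 : y * z ∈ Ideal.span {a} * J ^ n := by
        rw [← hred, pow_succ']
        exact Ideal.mul_mem_mul hy hz
      obtain ⟨w, hw, hwz⟩ := Ideal.mem_span_singleton_mul.1 h5
      refine ⟨w, hw, ?_⟩
      apply hau.mul_right_cancel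
      rw [mul_right_comm, ← hq, ← map_mul, ← map_mul, ← hwz, mul_comm]
    obtain ⟨f, hf, hff⟩ :=
      main_red hinj hsemi G hact a hau hW J hJ2 haJ hstab I hI hEJ m hm
    refine ⟨1, f, hf, ?_⟩
    rw [pow_one]
    exact hff
  · intro x y z hx hy hz
    have hxR := hnz x hx
    have hle : nonZeroDivisors (invariantSubring G) ≤
        (nonZeroDivisors R).comap (invariantSubring G).subtype := fun x hx => hnz x hx
    let ψ : FractionRing (invariantSubring G) →+* FractionRing R :=
      IsLocalization.map (FractionRing R) (invariantSubring G).subtype hle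
    have hint : ∀ y : invariantSubring G,
        IsIntegral (invariantSubring G) (IsLocalization.mk' (FractionRing (invariantSubring G)) y
          (⟨x, hx⟩ : nonZeroDivisors (invariantSubring G))) →
        IsIntegral R (IsLocalization.mk' (FractionRing R) (y : R)
          (⟨x, hxR⟩ : nonZeroDivisors R)) := by
      intro y hy
      have h := IsIntegral.map_of_comp_eq (invariantSubring G).subtype ψ
        (IsLocalization.map_comp hle).symm hy
      have h2 : ψ (IsLocalization.mk' (FractionRing (invariantSubring G)) y
          (⟨x, hx⟩ : nonZeroDivisors (invariantSubring G))) =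
          IsLocalization.mk' (FractionRing R) (y : R) (⟨x, hxR⟩ : nonZeroDivisors R) :=
        IsLocalization.map_mk' hle _ _
      rw [h2] at h
      exact h
    obtain ⟨r, hr⟩ := Ideal.mem_span_singleton'.1
      (hArf.2 (x : R) y z hxR (hint y hy) (hint z hz))
    have hrG : r ∈ invariantSubring G := by
      intro σ hσ
      have h6 := congrArg σ hr
      rw [map_mul, map_mul, x.2 σ hσ, y.2 σ hσ, z.2 σ hσ, ← hr] at h6
      exact (mul_cancel_right_mem_nonZeroDivisors hxR).1 h6
    exact Ideal.mem_span_singleton'.2 ⟨⟨r, hrG⟩, Subtype.ext hr⟩
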